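/- arXiv:2006.15355 — 8 statements merged into one kernel-verified Lean document; each statement's English description precedes it below -/
import Mathlib

section
/- Let A be an alphabet with at least two letters. For every y, z ∈ nA* with y ≠ z, there exists v ∈ nA* such that the join yv ∨ z does not exist, or the join y ∨ zv does not exist. -/
open Stream'

variable {A : Type*} {n : ℕ}

/-- The initial-factor order `u ≤_init v` on `n`-tuples of strings:
`u i` is a prefix of `v i` for every coordinate `i`. -/
def initLE (u v : Fin n → List A) : Prop := ∀ i, u i <+: v i

/-- `w` is the join (least upper bound w.r.t. `initLE`) of `u` and `v`. -/
def IsJoin (u v w : Fin n → List A) : Prop :=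
  initLE u w ∧ initLE v w ∧ ∀ z, initLE u z → initLE v z → initLE w z

/-- The join of `u` and `v` exists. -/
def JoinEx (u v : Fin n → List A) : Prop := ∃ w, IsJoin u v w

/-- The set join `X ∨ Y = {x ∨ y : x ∈ X, y ∈ Y, x ∨ y exists}`. -/
def setJoin (X Y : Set (Fin n → List A)) : Set (Fin n → List A) :=
  {w | ∃ x ∈ X, ∃ y ∈ Y, IsJoin x y w}

/-- A joinless code: no two distinct elements have a join. -/
def Joinless (S : Set (Fin n → List A)) : Prop :=
  ∀ x ∈ S, ∀ y ∈ S, x ≠ y → ¬ JoinEx x y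

/-- A maximal joinless code. -/
def MaxJoinless (S : Set (Fin n → List A)) : Prop :=
  Joinless S ∧ ∀ T : Set (Fin n → List A), Joinless T → S ⊆ T → S = T

/-- Coordinatewise concatenation in `nA*`. -/
def cat (x v : Fin n → List A) : Fin n → List A := fun i => x i ++ v i

/-- The right ideal `S·nA*` generated by `S`. -/
def rIdeal (S : Set (Fin n → List A)) : Set (Fin n → List A) :=
  {w | ∃ s ∈ S, ∃ v, w = cat s v}

/-- Coordinatewise concatenation of a tuple of finite strings
with a tuple of right-infinite words. -/
def catOmega (x : Fin n → List A) (w : Fin n → Stream' A) : Fin n → Stream' A :=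
  fun i => x i ++ₛ w i

/-- `S·nA^ω`. -/
def omegaIdeal (S : Set (Fin n → List A)) : Set (Fin n → Stream' A) :=
  {w | ∃ s ∈ S, ∃ u, w = catOmega s u}

/-- `P ≡_fin Q`: the symmetric difference of the generated right ideals is finite. -/
def equivFin (P Q : Set (Fin n → List A)) : Prop :=
  (symmDiff (rIdeal P) (rIdeal Q)).Finite

/-- `maxlen(S)`: the maximum coordinate length over a (finite nonempty) set. -/
noncomputable def maxlen (S : Set (Fin n → List A)) : ℕ :=
  sSup {m | ∃ x ∈ S, ∃ i, (x i).length = m}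

theorem joinEx_comparable (u v : Fin n → List A) (h : JoinEx u v) (i : Fin n) :
    u i <+: v i ∨ v i <+: u i := by
  obtain ⟨w, h1, h2, -⟩ := h
  exact List.prefix_or_prefix_of_prefix (h1 i) (h2 i)

theorem exists_not_comparable (hA : ∀ b : A, ∃ c, c ≠ b) (x w : List A) (h : x <+: w)
    (hne : x ≠ w) : ∃ c : A, ¬ (x ++ [c] <+: w ∨ w <+: x ++ [c]) := by
  obtain ⟨t, rfl⟩ := h
  cases t with
  | nil => simp at hne
  | cons b t =>
    obtain ⟨c, hc⟩ := hA b
    refine ⟨c, ?_⟩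
    rw [List.prefix_append_right_inj, List.prefix_append_right_inj, List.cons_prefix_cons,
      List.cons_prefix_cons]
    rintro (⟨h, -⟩ | ⟨h, -⟩)
    · exact hc h
    · exact hc h.symm

/-- For `y ≠ z` in `nA*` (with `|A| ≥ 2`) there is `v` such that `yv ∨ z` does not
exist or `y ∨ zv` does not exist. -/
theorem stmt_2 [Fintype A] (hA : 2 ≤ Fintype.card A) (hn : 1 ≤ n)
    (y z : Fin n → List A) (hyz : y ≠ z) :
    ∃ v : Fin n → List A, ¬ JoinEx (cat y v) z ∨ ¬ JoinEx y (cat z v) := by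
  have hA' : ∀ b : A, ∃ c, c ≠ b := by
    haveI : Nontrivial A := Fintype.one_lt_card_iff_nontrivial.mp hA
    exact exists_ne
  obtain ⟨i, hi⟩ := Function.ne_iff.mp hyz
  by_cases h1 : y i <+: z i
  · obtain ⟨c, hc⟩ := exists_not_comparable hA' _ _ h1 hi
    exact ⟨fun _ => [c], Or.inl fun h => hc (joinEx_comparable _ _ h i)⟩
  by_cases h2 : z i <+: y i
  · obtain ⟨c, hc⟩ := exists_not_comparable hA' _ _ h2 (Ne.symm hi)
    exact ⟨fun _ => [c], Or.inr fun h => hc (joinEx_comparable _ _ h i).symm⟩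
  · refine ⟨fun _ => [], Or.inl fun h => ?_⟩
    have := joinEx_comparable _ _ h i
    simp only [cat, List.append_nil] at this
    tauto
end

section
/- For any sets X, Y ⊆ nA*: (1) X·nA* ∩ Y·nA* = (X ∨ Y)·nA*, and X·nA^ω ∩ Y·nA^ω = (X ∨ Y)·nA^ω; (2) if X and Y are finite then the right ideal X·nA* ∩ Y·nA* is generated by a finite set; (3) if X and Y are joinless codes then X ∨ Y is a joinless code generating X·nA* ∩ Y·nA*. -/
open Stream'

variable {A : Type*} {n : ℕ}

open Classical in
/-- The candidate join: the longer string in each coordinate. -/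
noncomputable def jn (u v : Fin n → List A) : Fin n → List A :=
  fun i => if (u i).length ≤ (v i).length then v i else u i

theorem initLE_trans' {u v w : Fin n → List A} (h : initLE u v) (k : initLE v w) :
    initLE u w := fun i => (h i).trans (k i)

theorem isJoin_jn {u v z : Fin n → List A} (hu : initLE u z) (hv : initLE v z) :
    IsJoin u v (jn u v) := by
  refine ⟨fun i => ?_, fun i => ?_, fun t h k i => ?_⟩
  · unfold jn
    split_ifs with h
    · exact List.prefix_of_prefix_length_le (hu i) (hv i) h
    · exact List.prefix_rfl
  · unfold jn
    split_ifs with h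
    · exact List.prefix_rfl
    · exact List.prefix_of_prefix_length_le (hv i) (hu i) (by omega)
  · unfold jn
    split_ifs
    · exact k i
    · exact h i

theorem isJoin_unique' {u v w w' : Fin n → List A} (h : IsJoin u v w) (k : IsJoin u v w') :
    w = w' := by
  funext i
  have h1 := h.2.2 w' k.1 k.2.1 i
  have h2 := k.2.2 w h.1 h.2.1 i
  exact h1.eq_of_length (le_antisymm h1.length_le h2.length_le)

theorem mem_rIdeal' {S : Set (Fin n → List A)} {w : Fin n → List A} :
    w ∈ rIdeal S ↔ ∃ s ∈ S, initLE s w := by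
  constructor
  · rintro ⟨s, hs, v, rfl⟩
    exact ⟨s, hs, fun i => List.prefix_append _ _⟩
  · rintro ⟨s, hs, h⟩
    choose v hv using h
    exact ⟨s, hs, v, funext fun i => (hv i).symm⟩

theorem mem_omegaIdeal' {S : Set (Fin n → List A)} {w : Fin n → Stream' A} :
    w ∈ omegaIdeal S ↔ ∃ s ∈ S, ∀ i, ∃ m, s i <+: (w i).take m := by
  constructor
  · rintro ⟨s, hs, v, rfl⟩
    refine ⟨s, hs, fun i => ⟨(s i).length, ?_⟩⟩
    simp only [catOmega]
    rw [Stream'.take_append_of_le_length (h := le_rfl), List.take_length]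
  · rintro ⟨s, hs, h⟩
    choose m v hv using h
    refine ⟨s, hs, fun i => v i ++ₛ (w i).drop (m i), funext fun i => ?_⟩
    simp only [catOmega]
    rw [← Stream'.append_append_stream, hv, Stream'.append_take_drop]

theorem take_prefix_take' (s : Stream' A) {a b : ℕ} (h : a ≤ b) : s.take a <+: s.take b := by
  obtain ⟨c, rfl⟩ := Nat.exists_eq_add_of_le h
  rw [Stream'.take_add]
  exact List.prefix_append _ _

theorem rIdeal_inter' (X Y : Set (Fin n → List A)) :
    rIdeal X ∩ rIdeal Y = rIdeal (setJoin X Y) := by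
  ext w
  simp only [Set.mem_inter_iff, mem_rIdeal']
  constructor
  · rintro ⟨⟨x, hx, h⟩, y, hy, k⟩
    exact ⟨jn x y, ⟨x, hx, y, hy, isJoin_jn h k⟩, (isJoin_jn h k).2.2 w h k⟩
  · rintro ⟨s, ⟨x, hx, y, hy, j⟩, h⟩
    exact ⟨⟨x, hx, initLE_trans' j.1 h⟩, y, hy, initLE_trans' j.2.1 h⟩

theorem omegaIdeal_inter' (X Y : Set (Fin n → List A)) :
    omegaIdeal X ∩ omegaIdeal Y = omegaIdeal (setJoin X Y) := by
  ext w
  simp only [Set.mem_inter_iff, mem_omegaIdeal']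
  constructor
  · rintro ⟨⟨x, hx, h⟩, y, hy, k⟩
    choose a ha using h
    choose b hb using k
    have h : initLE x (fun i => (w i).take (max (a i) (b i))) :=
      fun i => (ha i).trans (take_prefix_take' _ (le_max_left _ _))
    have k : initLE y (fun i => (w i).take (max (a i) (b i))) :=
      fun i => (hb i).trans (take_prefix_take' _ (le_max_right _ _))
    exact ⟨jn x y, ⟨x, hx, y, hy, isJoin_jn h k⟩,
      fun i => ⟨_, (isJoin_jn h k).2.2 _ h k i⟩⟩
  · rintro ⟨s, ⟨x, hx, y, hy, j⟩, h⟩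
    choose m hm using h
    exact ⟨⟨x, hx, fun i => ⟨m i, (j.1 i).trans (hm i)⟩⟩,
      y, hy, fun i => ⟨m i, (j.2.1 i).trans (hm i)⟩⟩

theorem joinless_setJoin' {X Y : Set (Fin n → List A)} (hX : Joinless X) (hY : Joinless Y) :
    Joinless (setJoin X Y) := by
  rintro w ⟨x, hx, y, hy, j⟩ w' ⟨x', hx', y', hy', j'⟩ hne ⟨z, hz, hz', -⟩
  have e1 : x = x' := by
    by_contra h
    exact hX x hx x' hx' h ⟨_, isJoin_jn (initLE_trans' j.1 hz) (initLE_trans' j'.1 hz')⟩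
  have e2 : y = y' := by
    by_contra h
    exact hY y hy y' hy' h ⟨_, isJoin_jn (initLE_trans' j.2.1 hz) (initLE_trans' j'.2.1 hz')⟩
  subst e1 e2
  exact hne (isJoin_unique' j j')

/-- Set joins and intersections of right ideals. -/
theorem stmt_3 [Fintype A] [Nonempty A] (hn : 1 ≤ n) (X Y : Set (Fin n → List A)) :
    (rIdeal X ∩ rIdeal Y = rIdeal (setJoin X Y) ∧
      omegaIdeal X ∩ omegaIdeal Y = omegaIdeal (setJoin X Y)) ∧
    (X.Finite → Y.Finite →
      ∃ G : Set (Fin n → List A), G.Finite ∧ rIdeal X ∩ rIdeal Y = rIdeal G) ∧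
    (Joinless X → Joinless Y →
      Joinless (setJoin X Y) ∧ rIdeal X ∩ rIdeal Y = rIdeal (setJoin X Y)) := by
  refine ⟨⟨rIdeal_inter' X Y, omegaIdeal_inter' X Y⟩, fun hX hY => ?_,
    fun hX hY => ⟨joinless_setJoin' hX hY, rIdeal_inter' X Y⟩⟩
  refine ⟨setJoin X Y, (hX.image2 jn hY).subset ?_, rIdeal_inter' X Y⟩
  rintro w ⟨x, hx, y, hy, j⟩
  exact ⟨x, hx, y, hy, isJoin_unique' (isJoin_jn j.1 j.2.1) j⟩
end

section
/- For all finite joinless codes P, Q ⊆ nA* the following are equivalent: (1) P ∨ Q = ∅; (2) P·nA* ∩ Q·nA* = ∅; (3) P·nA^ω ∩ Q·nA^ω = ∅. -/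
open Stream'

variable {A : Type*} {n : ℕ}

theorem stream_compat (s t : List A) (u v : Stream' A) (h : s ++ₛ u = t ++ₛ v) :
    s <+: t ∨ t <+: s := by
  induction s generalizing t with
  | nil => exact Or.inl List.nil_prefix
  | cons a s ih =>
    cases t with
    | nil => exact Or.inr List.nil_prefix
    | cons b t =>
      rw [Stream'.cons_append_stream, Stream'.cons_append_stream] at h
      have h1 : a = b := congrArg Stream'.head h
      have h2 : s ++ₛ u = t ++ₛ v := congrArg Stream'.tail h
      subst h1
      rcases ih t h2 with h3 | h3
      · exact Or.inl ((List.prefix_cons_inj a).2 h3)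
      · exact Or.inr ((List.prefix_cons_inj a).2 h3)

theorem exists_join_of_compat (x y : Fin n → List A)
    (h : ∀ i, x i <+: y i ∨ y i <+: x i) : ∃ w, IsJoin x y w := by
  have H : ∀ i, ∃ w, x i <+: w ∧ y i <+: w ∧ ∀ z, x i <+: z → y i <+: z → w <+: z := by
    intro i
    rcases h i with h | h
    · exact ⟨y i, h, List.prefix_rfl, fun z _ hz => hz⟩
    · exact ⟨x i, List.prefix_rfl, h, fun z hz _ => hz⟩
  choose w h1 h2 h3 using H
  exact ⟨w, h1, h2, fun z hx hy i => h3 i (z i) (hx i) (hy i)⟩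

theorem mem_rIdeal_of_initLE {S : Set (Fin n → List A)} {s w : Fin n → List A}
    (hs : s ∈ S) (h : initLE s w) : w ∈ rIdeal S := by
  choose v hv using h
  exact ⟨s, hs, v, funext fun i => (hv i).symm⟩

/-- For finite joinless codes `P, Q`: `P ∨ Q = ∅` iff the generated right ideals are
disjoint, iff the generated `ω`-ideals are disjoint. -/
theorem stmt_4 [Fintype A] [Nonempty A] (hn : 1 ≤ n) (P Q : Set (Fin n → List A))
    (hPf : P.Finite) (hQf : Q.Finite) (hP : Joinless P) (hQ : Joinless Q) :
    (setJoin P Q = ∅ ↔ rIdeal P ∩ rIdeal Q = ∅) ∧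
    (rIdeal P ∩ rIdeal Q = ∅ ↔ omegaIdeal P ∩ omegaIdeal Q = ∅) := by
  have h12 : (setJoin P Q).Nonempty → (rIdeal P ∩ rIdeal Q).Nonempty := by
    rintro ⟨w, x, hx, y, hy, hxw, hyw, -⟩
    exact ⟨w, mem_rIdeal_of_initLE hx hxw, mem_rIdeal_of_initLE hy hyw⟩
  have h23 : (rIdeal P ∩ rIdeal Q).Nonempty → (omegaIdeal P ∩ omegaIdeal Q).Nonempty := by
    rintro ⟨w, ⟨x, hx, u, rfl⟩, ⟨y, hy, v, h⟩⟩
    obtain ⟨a⟩ := ‹Nonempty A›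
    refine ⟨catOmega (cat x u) (fun _ => Stream'.const a),
      ⟨x, hx, catOmega u (fun _ => Stream'.const a), ?_⟩,
      ⟨y, hy, catOmega v (fun _ => Stream'.const a), ?_⟩⟩
    · funext i
      exact Stream'.append_append_stream _ _ _
    · rw [h]
      funext i
      exact Stream'.append_append_stream _ _ _
  have h31 : (omegaIdeal P ∩ omegaIdeal Q).Nonempty → (setJoin P Q).Nonempty := by
    rintro ⟨w, ⟨x, hx, u, rfl⟩, ⟨y, hy, v, h⟩⟩
    obtain ⟨w, hw⟩ := exists_join_of_compat x y
      (fun i => stream_compat (x i) (y i) (u i) (v i) (congrFun h i))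
    exact ⟨w, x, hx, y, hy, hw⟩
  simp only [← Set.not_nonempty_iff_eq_empty]
  tauto
end

section
/- Let A be an alphabet with at least two letters. For every finite nonempty joinless code Q ⊆ nA* there exists a finite maximal joinless code C ⊆ nA* such that Q ⊆ C and maxlen(C) = maxlen(Q). (Such a C is called a completion of Q.) -/
open Stream'

variable {A : Type*} {n : ℕ}

theorem joinEx_iff_aux {A : Type*} {n : ℕ} (u v : Fin n → List A) :
    JoinEx u v ↔ ∀ i, u i <+: v i ∨ v i <+: u i := by
  classical
  constructor
  · rintro ⟨w, h1, h2, -⟩ i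
    exact List.prefix_or_prefix_of_prefix (h1 i) (h2 i)
  · intro h
    refine ⟨fun i => if u i <+: v i then v i else u i, ?_, ?_, ?_⟩
    · intro i
      by_cases hi : u i <+: v i
      · simpa [hi] using hi
      · simp [hi]
    · intro i
      by_cases hi : u i <+: v i
      · simp [hi]
      · simpa [hi] using (h i).resolve_left hi
    · intro z h1 h2 i
      by_cases hi : u i <+: v i
      · simpa [hi] using h2 i
      · simpa [hi] using h1 i

/-- Existence of a finite completion of a finite nonempty joinless code, with the
same `maxlen` (for `|A| ≥ 2`). -/
theorem stmt_9 [Fintype A] (hA : 2 ≤ Fintype.card A) (hn : 1 ≤ n)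
    (Q : Set (Fin n → List A)) (hQf : Q.Finite) (hQne : Q.Nonempty)
    (hQ : Joinless Q) :
    ∃ C : Set (Fin n → List A),
      C.Finite ∧ MaxJoinless C ∧ Q ⊆ C ∧ maxlen C = maxlen Q := by
  classical
  have hne : Nonempty A := Fintype.card_pos_iff.mp (by omega)
  obtain ⟨a⟩ := hne
  have hbdd : ∀ x ∈ Q, ∀ i, (x i).length ≤ maxlen Q := by
    intro x hx i
    refine le_csSup ?_ ⟨x, hx, i, rfl⟩
    have hf : (⋃ i : Fin n, (fun x : Fin n → List A => (x i).length) '' Q).Finite :=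
      Set.finite_iUnion fun i => hQf.image _
    refine (hf.subset ?_).bddAbove
    rintro m ⟨y, hy, j, rfl⟩
    exact Set.mem_iUnion.mpr ⟨j, y, hy, rfl⟩
  set L := maxlen Q with hL
  let R : Set (Fin n → List A) :=
    {x | (∀ i, (x i).length = L) ∧ ∀ q ∈ Q, ¬ JoinEx x q}
  have hsym : ∀ x y : Fin n → List A, JoinEx x y → JoinEx y x := by
    intro x y h
    rw [joinEx_iff_aux] at h ⊢
    exact fun i => (h i).symm
  have hRf : R.Finite := by
    refine (Set.Finite.pi' (t := fun _ : Fin n => {l : List A | l.length = L})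
      (fun _ => List.finite_length_eq A L)).subset ?_
    intro x hx
    exact hx.1
  have hlen : ∀ x ∈ Q ∪ R, ∀ i, (x i).length ≤ L := by
    rintro x (hx | hx) i
    · exact hbdd x hx i
    · exact (hx.1 i).le
  refine ⟨Q ∪ R, hQf.union hRf, ⟨?_, ?_⟩, Set.subset_union_left, ?_⟩
  · rintro x (hx | hx) y (hy | hy) hxy hj
    · exact hQ x hx y hy hxy hj
    · exact hy.2 x hx (hsym _ _ hj)
    · exact hx.2 y hy hj
    · rw [joinEx_iff_aux] at hj
      refine hxy (funext fun i => ?_)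
      rcases hj i with h | h
      · exact h.eq_of_length (by rw [hx.1, hy.1])
      · exact (h.eq_of_length (by rw [hx.1, hy.1])).symm
  · intro T hT hsub
    refine Set.Subset.antisymm hsub fun t ht => ?_
    by_contra htC
    let t' : Fin n → List A := fun i => (t i ++ List.replicate L a).take L
    have ht'len : ∀ i, (t' i).length = L := by
      intro i
      simp [t']
    have hcmp : ∀ i, t i <+: t' i ∨ t' i <+: t i := fun i =>
      List.prefix_or_prefix_of_prefix (List.prefix_append _ _) (List.take_prefix _ _)
    by_cases hq : ∃ q ∈ Q, JoinEx t' q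
    · obtain ⟨q, hqQ, hj⟩ := hq
      rw [joinEx_iff_aux] at hj
      have hpre : ∀ i, q i <+: t' i := by
        intro i
        rcases hj i with h | h
        · have h2 := hbdd q hqQ i
          have h3 := ht'len i
          rw [h.eq_of_length_le (by omega)]
        · exact h
      refine hT t ht q (hsub (Or.inl hqQ)) ?_ ?_
      · rintro rfl
        exact htC (Or.inl hqQ)
      · rw [joinEx_iff_aux]
        intro i
        rcases hcmp i with h | h
        · exact List.prefix_or_prefix_of_prefix h (hpre i)
        · exact Or.inr ((hpre i).trans h)
    · push Not at hq
      have hR : t' ∈ R := ⟨ht'len, hq⟩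
      refine hT t ht t' (hsub (Or.inr hR)) ?_ ((joinEx_iff_aux _ _).mpr hcmp)
      intro h
      rw [← h] at hR
      exact htC (Or.inr hR)
  · obtain ⟨q0, hq0⟩ := hQne
    apply le_antisymm
    · refine csSup_le ⟨_, q0, Or.inl hq0, ⟨0, hn⟩, rfl⟩ ?_
      rintro m ⟨x, hx, i, rfl⟩
      exact hlen x hx i
    · rw [hL]
      refine csSup_le_csSup ⟨L, ?_⟩ ⟨_, q0, hq0, ⟨0, hn⟩, rfl⟩ ?_
      · rintro m ⟨x, hx, i, rfl⟩
        exact hlen x hx i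
      · rintro m ⟨x, hx, i, rfl⟩
        exact ⟨x, Or.inl hx, i, rfl⟩
end

section
/- For every right-ideal morphism f of nA*: (1) if f(domC(f)) is joinless then domC(f) is joinless; (2) if C ⊆ Im(f) is an initial-factor code then f⁻¹(C) is an initial-factor code; (3) if C ⊆ Im(f) is a joinless code then f⁻¹(C) is a joinless code; (4) if domC(f) is finite then for every y ∈ Im(f) the fiber f⁻¹(y) is finite. -/
open Stream'

variable {A : Type*} {n : ℕ}

/-- A right-ideal morphism of `nA*`, as a partial function:
if `f x = y` then `f (xv) = yv` (in particular the domain is a right ideal). -/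
def IsRIM (f : (Fin n → List A) →. (Fin n → List A)) : Prop :=
  ∀ x y, y ∈ f x → ∀ v, cat y v ∈ f (cat x v)

/-- The domain code `domC f`: the `initLE`-minimal elements of `Dom f`
(the unique initial-factor code generating the right ideal `Dom f`). -/
def domC (f : (Fin n → List A) →. (Fin n → List A)) : Set (Fin n → List A) :=
  {x ∈ f.Dom | ∀ y ∈ f.Dom, initLE y x → y = x}

/-- The image code `imC f`: the `initLE`-minimal elements of `Im f`
(the unique initial-factor code generating the right ideal `Im f`). -/
def imC (f : (Fin n → List A) →. (Fin n → List A)) : Set (Fin n → List A) :=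
  {y ∈ f.ran | ∀ z ∈ f.ran, initLE z y → z = y}

/-- An initial-factor code: an antichain for the strict initial-factor order. -/
def InitCode (S : Set (Fin n → List A)) : Prop :=
  ∀ x ∈ S, ∀ y ∈ S, initLE x y → x = y

/-- `maxlen` of a right-ideal morphism: `maxlen(domC(f) ∪ f(domC(f)))`. -/
noncomputable def maxlenM (f : (Fin n → List A) →. (Fin n → List A)) : ℕ :=
  maxlen (domC f ∪ f.image (domC f))

theorem aux_cat_of_le {u v : Fin n → List A} (h : initLE u v) : ∃ t, cat u t = v := by
  choose t ht using h
  exact ⟨t, funext ht⟩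

theorem aux_le_cat (u t : Fin n → List A) : initLE u (cat u t) := fun i => ⟨t i, rfl⟩

theorem aux_cat_left {u s t : Fin n → List A} (h : cat u s = cat u t) : s = t := by
  funext i
  exact List.append_cancel_left (congrFun h i)

theorem aux_cat_right {u v t : Fin n → List A} (h : cat u t = cat v t) : u = v := by
  funext i
  exact List.append_cancel_right (congrFun h i)

theorem aux_joinEx {u v w : Fin n → List A} (hu : initLE u w) (hv : initLE v w) :
    JoinEx u v := by
  have key : ∀ i, ∃ c : List A, u i <+: c ∧ v i <+: c ∧
      ∀ z, u i <+: z → v i <+: z → c <+: z := by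
    intro i
    rcases List.prefix_or_prefix_of_prefix (hu i) (hv i) with h | h
    · exact ⟨v i, h, List.prefix_rfl, fun z _ hz => hz⟩
    · exact ⟨u i, List.prefix_rfl, h, fun z hz _ => hz⟩
  choose c h1 h2 h3 using key
  exact ⟨c, h1, h2, fun z hz hz' i => h3 i (z i) (hz i) (hz' i)⟩

/-- Joins transfer along a right-ideal morphism, injectively. -/
theorem aux_main {f : (Fin n → List A) →. (Fin n → List A)} (hf : IsRIM f)
    {x x' y y' : Fin n → List A} (hy : y ∈ f x) (hy' : y' ∈ f x') (hj : JoinEx x x') :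
    JoinEx y y' ∧ (y = y' → x = x') := by
  obtain ⟨w, h1, h2, -⟩ := hj
  obtain ⟨s, hs⟩ := aux_cat_of_le h1
  obtain ⟨t, ht⟩ := aux_cat_of_le h2
  have e1 := hf x y hy s
  have e2 := hf x' y' hy' t
  rw [hs] at e1
  rw [ht] at e2
  have e : cat y s = cat y' t := Part.mem_unique e1 e2
  refine ⟨aux_joinEx (aux_le_cat y s) (e ▸ aux_le_cat y' t), ?_⟩
  rintro rfl
  have hst := aux_cat_left e
  subst hst
  exact aux_cat_right (hs.trans ht.symm)

theorem aux_domC (f : (Fin n → List A) →. (Fin n → List A)) :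
    ∀ (k : ℕ) (x : Fin n → List A), (∑ i, (x i).length) = k → x ∈ f.Dom →
      ∃ d ∈ domC f, initLE d x := by
  intro k
  induction k using Nat.strong_induction_on with
  | _ k ih =>
    intro x hk hx
    by_cases h : x ∈ domC f
    · exact ⟨x, h, fun i => List.prefix_rfl⟩
    · have h' : ∃ y ∈ f.Dom, initLE y x ∧ y ≠ x := by
        by_contra hc
        apply h
        refine ⟨hx, fun y hy hle => ?_⟩
        by_contra hne
        exact hc ⟨y, hy, hle, hne⟩
      obtain ⟨y, hy, hle, hne⟩ := h'
      obtain ⟨j, hj⟩ := Function.ne_iff.mp hne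
      have hlt : (∑ i, (y i).length) < k := by
        rw [← hk]
        refine Finset.sum_lt_sum (fun i _ => (hle i).length_le) ⟨j, Finset.mem_univ j, ?_⟩
        exact lt_of_le_of_ne (hle j).length_le fun e => hj ((hle j).eq_of_length e)
      obtain ⟨d, hd, hdy⟩ := ih _ hlt y rfl hy
      exact ⟨d, hd, fun i => (hdy i).trans (hle i)⟩

/-- Inverse images of codes under a right-ideal morphism. -/
theorem stmt_13 [Fintype A] [Nonempty A] (hn : 1 ≤ n)
    (f : (Fin n → List A) →. (Fin n → List A)) (hf : IsRIM f) :
    (Joinless (f.image (domC f)) → Joinless (domC f)) ∧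
    (∀ C ⊆ f.ran, InitCode C → InitCode (f.preimage C)) ∧
    (∀ C ⊆ f.ran, Joinless C → Joinless (f.preimage C)) ∧
    ((domC f).Finite → ∀ y ∈ f.ran, (f.preimage {y}).Finite) := by
  refine ⟨?_, ?_, ?_, ?_⟩
  · intro h x hx x' hx' hne hj
    obtain ⟨y, hy⟩ := (PFun.mem_dom f x).mp hx.1
    obtain ⟨y', hy'⟩ := (PFun.mem_dom f x').mp hx'.1
    obtain ⟨h1, h2⟩ := aux_main hf hy hy' hj
    exact h y ⟨x, hx, hy⟩ y' ⟨x', hx', hy'⟩ (fun e => hne (h2 e)) h1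
  · rintro C - h x ⟨y, hyC, hy⟩ x' ⟨y', hyC', hy'⟩ hle
    obtain ⟨t, rfl⟩ := aux_cat_of_le hle
    have e : y' = cat y t := Part.mem_unique hy' (hf x y hy t)
    have e2 : y = y' := h y hyC y' hyC' (e ▸ aux_le_cat y t)
    exact (aux_main hf hy hy' (aux_joinEx hle fun i => List.prefix_rfl)).2 e2
  · rintro C - h x ⟨y, hyC, hy⟩ x' ⟨y', hyC', hy'⟩ hne hj
    obtain ⟨h1, h2⟩ := aux_main hf hy hy' hj
    exact h y hyC y' hyC' (fun e => hne (h2 e)) h1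
  · intro hfin y _
    have hsub : f.preimage {y} ⊆ ⋃ d ∈ domC f, {x | initLE d x ∧ y ∈ f x} := by
      rintro x ⟨y', rfl, hy⟩
      obtain ⟨d, hd, hdx⟩ := aux_domC f _ x rfl ((PFun.mem_dom f x).mpr ⟨_, hy⟩)
      exact Set.mem_biUnion hd ⟨hdx, hy⟩
    refine (hfin.biUnion fun d hd => ?_).subset hsub
    apply Set.Subsingleton.finite
    rintro x ⟨hx, hyx⟩ x' ⟨hx', hyx'⟩
    obtain ⟨s, rfl⟩ := aux_cat_of_le hx
    obtain ⟨t, rfl⟩ := aux_cat_of_le hx'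
    obtain ⟨z, hz⟩ := (PFun.mem_dom f d).mp hd.1
    have e1 := Part.mem_unique hyx (hf d z hz s)
    have e2 := Part.mem_unique hyx' (hf d z hz t)
    rw [aux_cat_left (e1.symm.trans e2)]
end

section
/- If g is an injective right-ideal morphism of nA*, then g is normal, i.e. g(domC(g)) = imC(g). -/
open Stream'

variable {A : Type*} {n : ℕ}

/-- An injective right-ideal morphism is normal: `g(domC g) = imC g`. -/
theorem stmt_14 [Fintype A] [Nonempty A] (hn : 1 ≤ n)
    (g : (Fin n → List A) →. (Fin n → List A)) (hg : IsRIM g)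
    (hinj : ∀ x₁ x₂ y, y ∈ g x₁ → y ∈ g x₂ → x₁ = x₂) :
    g.image (domC g) = imC g := by
  have hex : ∀ u w : Fin n → List A, initLE u w → ∃ v, cat u v = w := by
    intro u w h
    choose v hv using h
    exact ⟨v, funext hv⟩
  have hle : ∀ u v : Fin n → List A, initLE u (cat u v) :=
    fun u v i => List.prefix_append _ _
  ext y
  constructor
  · rintro ⟨x, ⟨_, hmin⟩, hy⟩
    refine ⟨⟨x, hy⟩, ?_⟩
    rintro z ⟨x', hz⟩ hzy
    obtain ⟨v, rfl⟩ := hex z y hzy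
    have hx : x = cat x' v := hinj _ _ _ hy (hg _ _ hz v)
    have hxx : x' = x := by
      apply hmin x' ((PFun.mem_dom _ _).2 ⟨z, hz⟩)
      rw [hx]
      exact hle _ _
    rw [hxx] at hz
    exact Part.mem_unique hz hy
  · rintro ⟨⟨x, hy⟩, hmin⟩
    refine ⟨x, ⟨(PFun.mem_dom _ _).2 ⟨y, hy⟩, ?_⟩, hy⟩
    intro x' hx' hle'
    obtain ⟨y', hy'⟩ := (PFun.mem_dom _ _).1 hx'
    obtain ⟨v, rfl⟩ := hex x' x hle'
    have e : cat y' v = y := Part.mem_unique (hg _ _ hy' v) hy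
    have e2 : y' = y := by
      apply hmin y' ⟨x', hy'⟩
      rw [← e]
      exact hle _ _
    rw [e2] at hy'
    exact hinj _ _ _ hy' hy
end

section
/- Let h be a right-ideal morphism of nA* with domC(h) finite, and let Q ⊆ Im(h) be a finite set such that for all q ∈ Q and all y ∈ h(domC(h)): if y ∨ q exists then y ≤_init q. Then h⁻¹(Q·nA^ω) = h⁻¹(Q)·nA^ω, where h⁻¹(Q·nA^ω) is computed for the extension of h to nA^ω (with domain domC(h)·nA^ω, mapping pu to h(p)u for p ∈ domC(h), u ∈ nA^ω). -/
open Stream'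

variable {A : Type*} {n : ℕ}

theorem prefix_or_of_stream (a b : List A) (s t : Stream' A) (e : a ++ₛ s = b ++ₛ t) :
    a <+: b ∨ b <+: a := by
  induction a generalizing b with
  | nil => exact Or.inl List.nil_prefix
  | cons x a ih =>
    cases b with
    | nil => exact Or.inr List.nil_prefix
    | cons y b =>
      rw [Stream'.cons_append_stream, Stream'.cons_append_stream] at e
      have h1 := congrArg Stream'.head e
      have h2 := congrArg Stream'.tail e
      simp only [Stream'.head_cons, Stream'.tail_cons] at h1 h2
      subst h1
      simpa [List.cons_prefix_cons] using ih b h2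

theorem stream_append_cancel (a : List A) (s t : Stream' A) (e : a ++ₛ s = a ++ₛ t) :
    s = t := by
  induction a with
  | nil => simpa using e
  | cons x a ih =>
    rw [Stream'.cons_append_stream, Stream'.cons_append_stream] at e
    have h2 := congrArg Stream'.tail e
    simp only [Stream'.tail_cons] at h2
    exact ih h2

theorem joinEx_of_compat (y q : Fin n → List A) (hc : ∀ i, y i <+: q i ∨ q i <+: y i) :
    JoinEx y q := by
  classical
  refine ⟨fun i => if y i <+: q i then q i else y i, ?_, ?_, ?_⟩
  · intro i
    by_cases c : y i <+: q i <;> simp [c]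
  · intro i
    rcases hc i with c | c
    · simp [c]
    · by_cases d : y i <+: q i <;> simp [c, d]
  · intro z h1 h2 i
    by_cases c : y i <+: q i
    · simpa [c] using h2 i
    · simpa [c] using h1 i

theorem initLE_cat {y q : Fin n → List A} (hc : initLE y q) : ∃ z, q = cat y z := by
  choose z hz using hc
  exact ⟨z, funext fun i => (hz i).symm⟩

theorem catOmega_cat (y z : Fin n → List A) (u : Fin n → Stream' A) :
    catOmega (cat y z) u = catOmega y (catOmega z u) :=
  funext fun i => Stream'.append_append_stream _ _ _

theorem exists_domC (f : (Fin n → List A) →. (Fin n → List A)) (x : Fin n → List A)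
    (hx : x ∈ f.Dom) : ∃ p ∈ domC f, initLE p x := by
  induction hN : ∑ i, (x i).length using Nat.strong_induction_on generalizing x with
  | _ N ih =>
    by_cases hm : x ∈ domC f
    · exact ⟨x, hm, fun i => List.prefix_refl _⟩
    · have : ∃ y ∈ f.Dom, initLE y x ∧ y ≠ x := by
        by_contra hcon
        apply hm
        refine ⟨hx, fun y hy hyx => ?_⟩
        by_contra hne
        exact hcon ⟨y, hy, hyx, hne⟩
      obtain ⟨y, hy, hyx, hne⟩ := this
      have hlt : ∑ i, (y i).length < N := by
        rw [← hN]
        obtain ⟨i, hi⟩ := Function.ne_iff.mp hne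
        refine Finset.sum_lt_sum (fun i _ => (hyx i).length_le) ⟨i, Finset.mem_univ _, ?_⟩
        refine lt_of_le_of_ne (hyx i).length_le fun hl => hi ((hyx i).eq_of_length hl)
      obtain ⟨p, hp, hpy⟩ := ih _ hlt y hy rfl
      exact ⟨p, hp, fun i => (hpy i).trans (hyx i)⟩

/-- For a right-ideal morphism `h` with finite domain code and a finite `Q ⊆ Im h`
satisfying condition `(⋆)`, the preimage of `Q·nA^ω` under the extension of `h`
to `nA^ω` equals `h⁻¹(Q)·nA^ω`. -/
theorem stmt_16 [Fintype A] [Nonempty A] (hn : 1 ≤ n)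
    (h : (Fin n → List A) →. (Fin n → List A)) (hh : IsRIM h)
    (hdfin : (domC h).Finite) (Q : Set (Fin n → List A)) (hQfin : Q.Finite)
    (hQran : Q ⊆ h.ran)
    (hstar : ∀ q ∈ Q, ∀ y ∈ h.image (domC h), JoinEx y q → initLE y q) :
    {w : Fin n → Stream' A | ∃ p ∈ domC h, ∃ u, w = catOmega p u ∧
        ∃ y ∈ h p, catOmega y u ∈ omegaIdeal Q}
      = omegaIdeal (h.preimage Q) := by
  ext w
  constructor
  · rintro ⟨p, hp, u, rfl, y, hy, q, hq, v, e⟩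
    have hc : ∀ i, y i <+: q i ∨ q i <+: y i := fun i =>
      prefix_or_of_stream _ _ _ _ (congrFun e i)
    obtain ⟨z, rfl⟩ := initLE_cat (hstar q hq y ⟨p, hp, hy⟩ (joinEx_of_compat y q hc))
    rw [catOmega_cat] at e
    have hu : u = catOmega z v := funext fun i => stream_append_cancel _ _ _ (congrFun e i)
    refine ⟨cat p z, ⟨cat y z, hq, hh p y hy z⟩, v, ?_⟩
    rw [hu, catOmega_cat]
  · rintro ⟨x, ⟨q, hq, hqx⟩, v, rfl⟩
    obtain ⟨p, hp, hpx⟩ := exists_domC h x ((PFun.mem_dom h x).2 ⟨q, hqx⟩)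
    obtain ⟨z, rfl⟩ := initLE_cat hpx
    obtain ⟨y, hy⟩ := (PFun.mem_dom h p).1 hp.1
    have hqe : q = cat y z := Part.mem_unique hqx (hh p y hy z)
    refine ⟨p, hp, catOmega z v, catOmega_cat _ _ _, y, hy, q, hq, v, ?_⟩
    rw [hqe, catOmega_cat]
end

section
/- For all n ≥ 1 and k ≥ 2, the monoid nM_{k,1} is regular: for every Φ ∈ nM_{k,1} there exists Φ' ∈ nM_{k,1} such that Φ ∘ Φ' ∘ Φ = Φ (as partial maps of nA_k^ω). -/
open Stream'

variable {A : Type*} {n : ℕ}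

/-- `Φ` (a partial map of `nA^ω`) is the extension to `nA^ω` of the right-ideal
morphism `f` of `nA*`. -/
def IsExt (f : (Fin n → List A) →. (Fin n → List A))
    (Φ : (Fin n → Stream' A) →. (Fin n → Stream' A)) : Prop :=
  Φ.Dom = omegaIdeal (domC f) ∧
  ∀ p ∈ domC f, ∀ u : Fin n → Stream' A, ∀ y ∈ f p,
    catOmega y u ∈ Φ (catOmega p u)

/-- Membership in the monoid `nM_{k,1}`: `Φ` is the extension to `nA^ω` of some
right-ideal morphism of `nA*` whose domain code is finite and joinless. -/
def InNM (Φ : (Fin n → Stream' A) →. (Fin n → Stream' A)) : Prop :=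
  ∃ f : (Fin n → List A) →. (Fin n → List A),
    IsRIM f ∧ (domC f).Finite ∧ Joinless (domC f) ∧ IsExt f Φ

theorem st_split (N : ℕ) (l : List A) (s : Stream' A) (h : l <+: s.take N) :
    l ++ₛ s.drop l.length = s := by
  have h1 : l = s.take l.length := by
    have h2 := List.prefix_iff_eq_take.1 h
    have h3 := h.length_le
    rw [Stream'.length_take] at h3
    rw [Stream'.take_take, min_eq_right h3] at h2
    exact h2
  conv_lhs => lhs; rw [h1]
  exact Stream'.append_take_drop _ _

theorem st_take_app (N : ℕ) (l : List A) (s : Stream' A) (h : l.length = N) :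
    (l ++ₛ s).take N = l := by
  subst h
  have := Stream'.append_take l s (n := 0)
  simpa using this.symm

theorem st_prefix (N : ℕ) (l : List A) (s : Stream' A) (h : l.length ≤ N) :
    l <+: (l ++ₛ s).take N := by
  obtain ⟨m, rfl⟩ := Nat.exists_eq_add_of_le h
  rw [Stream'.take_add, st_take_app _ _ _ rfl]
  exact List.prefix_append _ _

theorem st_drop (l : List A) (s : Stream' A) (m : ℕ) (h : m ≤ l.length) :
    (l ++ₛ s).drop m = l.drop m ++ₛ s := by
  conv_lhs => rw [← List.take_append_drop m l, Stream'.append_append_stream]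
  conv_lhs => arg 1; rw [← (List.length_take_of_le h)]
  rw [Stream'.drop_append_stream]

theorem regular_aux (Φ : (Fin n → Stream' A) →. (Fin n → Stream' A)) [Finite A] (hΦ : InNM Φ) :
    ∃ Φ' : (Fin n → Stream' A) →. (Fin n → Stream' A),
      InNM Φ' ∧ Φ.comp (Φ'.comp Φ) = Φ := by
  classical
  obtain ⟨f, hf, hfin, -, hdom, hval⟩ := hΦ
  obtain ⟨N, hN⟩ : ∃ N : ℕ, ∀ p ∈ domC f, ∀ q ∈ f p, ∀ i, (q i).length ≤ N := by
    have h1 : (f.image (domC f)).Finite := by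
      have : f.image (domC f) ⊆ ⋃ p ∈ domC f, {q | q ∈ f p} := by
        rintro q ⟨p, hp, hq⟩
        simp only [Set.mem_iUnion]
        exact ⟨p, hp, hq⟩
      refine (hfin.biUnion fun p _ => ?_).subset this
      exact Set.Subsingleton.finite fun a ha b hb => Part.mem_unique ha hb
    obtain ⟨N, hN⟩ := (h1.image fun q => ∑ i, (q i).length).bddAbove
    refine ⟨N, fun p hp q hq i => le_trans ?_ (hN ⟨q, ⟨p, hp, hq⟩, rfl⟩)⟩
    exact Finset.single_le_sum (f := fun i => (q i).length) (fun _ _ => Nat.zero_le _)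
      (Finset.mem_univ i)
  let R : (Fin n → List A) → Prop := fun w => ∃ p q, p ∈ domC f ∧ q ∈ f p ∧ initLE q w
  have hch : ∀ w, ∃ p q, R w → p ∈ domC f ∧ q ∈ f p ∧ initLE q w := by
    intro w
    by_cases h : R w
    · obtain ⟨p, q, h'⟩ := h
      exact ⟨p, q, fun _ => h'⟩
    · exact ⟨w, w, fun h' => absurd h' h⟩
  choose P Q hPQ using hch
  let T : (Fin n → List A) → (Fin n → List A) := fun x i => (x i).take N
  let S : (Fin n → Stream' A) → (Fin n → List A) := fun x i => (x i).take N
  let f' : (Fin n → List A) →. (Fin n → List A) := fun x =>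
    ⟨(∀ i, N ≤ (x i).length) ∧ R (T x), fun _ i => P (T x) i ++ (x i).drop (Q (T x) i).length⟩
  let Φ' : (Fin n → Stream' A) →. (Fin n → Stream' A) := fun x =>
    ⟨R (S x), fun _ i => P (S x) i ++ₛ (x i).drop (Q (S x) i).length⟩
  have hQ : ∀ w, R w → ∀ i, (Q w i).length ≤ N := fun w h i =>
    hN _ (hPQ w h).1 _ (hPQ w h).2.1 i
  have hT : ∀ w : Fin n → List A, (∀ i, (w i).length = N) → T w = w := by
    intro w h
    funext i
    exact List.take_of_length_le (h i).le
  have hD : domC f' = {w | (∀ i, (w i).length = N) ∧ R w} := by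
    ext w
    constructor
    · rintro ⟨⟨hl, hR⟩, hm⟩
      have hTl : ∀ i, (T w i).length = N := fun i => List.length_take_of_le (hl i)
      have h := hm (T w) ⟨fun i => (hTl i).ge, by rw [hT _ hTl]; exact hR⟩
        fun i => List.take_prefix _ _
      rw [h] at hTl hR
      exact ⟨hTl, hR⟩
    · rintro ⟨hl, hR⟩
      refine ⟨⟨fun i => (hl i).ge, by rw [hT _ hl]; exact hR⟩, ?_⟩
      rintro y ⟨hyl, -⟩ hyw
      funext i
      exact (hyw i).eq_of_length_le (by rw [hl i]; exact hyl i)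
  have hS : ∀ (w : Fin n → List A) u, (∀ i, (w i).length = N) → S (catOmega w u) = w := by
    intro w u h
    funext i
    exact st_take_app _ _ _ (h i)
  refine ⟨Φ', ⟨f', ?_, ?_, ?_, ?_, ?_⟩, ?_⟩
  · rintro x y ⟨⟨hl, hR⟩, rfl⟩ v
    have hTe : T (cat x v) = T x := by
      funext i
      exact List.take_append_of_le_length (hl i)
    refine ⟨⟨fun i => ?_, by rw [hTe]; exact hR⟩, ?_⟩
    · have := hl i
      simp only [cat, List.length_append]; omega
    · funext i
      change P (T (cat x v)) i ++ (cat x v i).drop (Q (T (cat x v)) i).length = _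
      rw [hTe]
      simp only [cat, f']
      rw [List.drop_append_of_le_length ((hQ _ hR i).trans (hl i)), List.append_assoc]
  · rw [hD]
    have : {l : List A | l.length = N}.Finite := List.finite_length_eq A N
    exact (Set.Finite.pi' (fun _ : Fin n => this)).subset fun w h => h.1
  · rw [hD]
    rintro x ⟨hx, -⟩ y ⟨hy, -⟩ hne ⟨w, hxw, hyw, -⟩
    apply hne
    funext i
    exact (List.prefix_of_prefix_length_le (hxw i) (hyw i) (by rw [hx, hy])).eq_of_length
      (by rw [hx, hy])
  · rw [hD]
    ext x
    constructor
    · intro h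
      refine ⟨S x, ⟨fun i => Stream'.length_take _ _, h⟩, fun i => (x i).drop N, ?_⟩
      funext i
      exact (Stream'.append_take_drop _ _).symm
    · rintro ⟨w, ⟨hl, hR⟩, u, rfl⟩
      change R (S (catOmega w u))
      rw [hS _ _ hl]; exact hR
  · rw [hD]
    rintro w ⟨hl, hR⟩ u y ⟨h, rfl⟩
    refine ⟨?_, ?_⟩
    · change R (S (catOmega w u))
      rw [hS _ _ hl]; exact hR
    · funext i
      change P (S (catOmega w u)) i ++ₛ (catOmega w u i).drop (Q (S (catOmega w u)) i).length =
        (P (T w) i ++ (w i).drop (Q (T w) i).length) ++ₛ u i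
      rw [hS _ _ hl, hT _ hl, Stream'.append_append_stream]
      congr 1
      exact st_drop _ _ _ (by rw [hl i]; exact hQ _ hR i)
  · have key : ∀ x y, y ∈ Φ x → ∃ x' ∈ Φ' y, y ∈ Φ x' := by
      intro x y hy
      have hx : x ∈ Φ.Dom := (PFun.mem_dom _ _).2 ⟨y, hy⟩
      rw [hdom] at hx
      obtain ⟨p, hp, u, rfl⟩ := hx
      obtain ⟨q, hq⟩ := (PFun.mem_dom _ _).1 hp.1
      obtain rfl := Part.mem_unique hy (hval p hp u q hq)
      have hR : R (S (catOmega q u)) :=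
        ⟨p, q, hp, hq, fun i => st_prefix _ _ _ (hN p hp q hq i)⟩
      generalize hyy : catOmega q u = y at *
      obtain ⟨h1, h2, h3⟩ := hPQ _ hR
      refine ⟨_, ⟨hR, rfl⟩, ?_⟩
      have h4 := hval _ h1 (fun i => (y i).drop (Q (S y) i).length) _ h2
      have h5 : catOmega (Q (S y)) (fun i => (y i).drop (Q (S y) i).length) = y := by
        funext i
        exact st_split N _ _ (h3 i)
      rw [h5] at h4
      exact h4
    funext x
    apply Part.ext
    intro z
    change z ∈ ((Φ x).bind Φ').bind Φ ↔ z ∈ Φ x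
    constructor
    · intro h
      obtain ⟨x', h', hz⟩ := Part.mem_bind_iff.1 h
      obtain ⟨y, hy, hx'⟩ := Part.mem_bind_iff.1 h'
      obtain ⟨x2, h2, h3⟩ := key x y hy
      obtain rfl := Part.mem_unique hx' h2
      obtain rfl := Part.mem_unique hz h3
      exact hy
    · intro hz
      obtain ⟨x2, h2, h3⟩ := key x z hz
      exact Part.mem_bind (Part.mem_bind hz h2) h3

/-- The monoid `nM_{k,1}` is regular: every `Φ ∈ nM_{k,1}` has `Φ' ∈ nM_{k,1}`
with `Φ ∘ Φ' ∘ Φ = Φ`. -/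
theorem stmt_19 (n k : ℕ) (hn : 1 ≤ n) (hk : 2 ≤ k)
    (A : Type*) [Fintype A] (hcard : Fintype.card A = k)
    (Φ : (Fin n → Stream' A) →. (Fin n → Stream' A)) (hΦ : InNM Φ) :
    ∃ Φ' : (Fin n → Stream' A) →. (Fin n → Stream' A),
      InNM Φ' ∧ Φ.comp (Φ'.comp Φ) = Φ := by
  exact regular_aux Φ hΦ
end
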